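/- arXiv:1612.08476 — 3 statements merged into one kernel-verified Lean document; each statement's English description precedes it below -/
import Mathlib

section
/- Let E be an admissible *-tring. Let E_0^r := span{θ_{y,z} : y,z ∈ E} ⊆ L_l(E), equipped with the multiplication opposite to composition and the involution T ↦ T*, let E be a right E_0^r-module via x·T := T(x), and define ⟨x,y⟩_r := θ_{x,y}. Then (E, E_0^r, ⟨·,·⟩_r) is a full admissible basic triple whose associated ternary product coincides with μ. -/
noncomputable section

open scoped ComplexConjugate

/-- The axioms of a `*`-ternary ring (`*`-tring) structure on a complex vector
space: `μ` is linear in the odd variables, conjugate-linear in the middle one,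
and satisfies the ternary associativity identities. -/
def IsTernaryProduct {E : Type*} [AddCommGroup E] [Module ℂ E]
    (μ : E → E → E → E) : Prop :=
  (∀ x x' y z : E, μ (x + x') y z = μ x y z + μ x' y z) ∧
  (∀ (c : ℂ) (x y z : E), μ (c • x) y z = c • μ x y z) ∧
  (∀ x y y' z : E, μ x (y + y') z = μ x y z + μ x y' z) ∧
  (∀ (c : ℂ) (x y z : E), μ x (c • y) z = conj c • μ x y z) ∧
  (∀ x y z z' : E, μ x y (z + z') = μ x y z + μ x y z') ∧
  (∀ (c : ℂ) (x y z : E), μ x y (c • z) = c • μ x y z) ∧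
  (∀ x y z u v : E, μ (μ x y z) u v = μ x (μ u z y) v) ∧
  (∀ x y z u v : E, μ x (μ u z y) v = μ x y (μ z u v))

/-- `S` is a left adjoint of `T` with respect to the ternary product `μ`:
`μ(x, Ty, z) = μ(Sx, y, z)` for all `x, y, z`.  For an admissible `*`-tring such
an `S` is unique and is denoted `T*`. -/
def IsAdj {E : Type*} [AddCommGroup E] [Module ℂ E] (μ : E → E → E → E)
    (T S : Module.End ℂ E) : Prop :=
  ∀ x y z : E, μ x (T y) z = μ (S x) y z

/-- The endomorphism `θ_{y,z} : x ↦ μ(x,y,z)`. -/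
def theta {E : Type*} [AddCommGroup E] [Module ℂ E] {μ : E → E → E → E}
    (h : IsTernaryProduct μ) (y z : E) : Module.End ℂ E where
  toFun x := μ x y z
  map_add' a b := h.1 a b y z
  map_smul' c a := h.2.1 c a y z

/-! Ternary associativity says that `θ_{z,y}` is an adjoint of `θ_{y,z}` and that
`T ∘ θ_{y,z} = θ_{y,Tz}` for `T = θ_{u,v}`; both facts extend by linearity to the span of the
`θ_{u,v}`, and the second one makes this span closed under composition.
Admissibility of the algebra needs no information on the span: if `S` is an adjoint of `T` and
`T ∘ S = 0`, then `μ(Sx, Sx, Sx) = μ(x, TSx, Sx) = 0` gives `S = 0`, and then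
`μ(Tx, Tx, Tx) = μ(STx, x, Tx) = 0` gives `T = 0`. -/

section

variable {E : Type*} [AddCommGroup E] [Module ℂ E] {μ : E → E → E → E} {T U S R : Module.End ℂ E}

section Theta

variable (h : IsTernaryProduct μ)
include h

theorem theta_apply (x y z : E) : theta h y z x = μ x y z := rfl

theorem theta_add_left (y y' z : E) : theta h (y + y') z = theta h y z + theta h y' z :=
  LinearMap.ext fun x => h.2.2.1 x y y' z

theorem theta_smul_left (c : ℂ) (y z : E) : theta h (c • y) z = conj c • theta h y z :=
  LinearMap.ext fun x => h.2.2.2.1 c x y z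

theorem theta_add_right (y z z' : E) : theta h y (z + z') = theta h y z + theta h y z' :=
  LinearMap.ext fun x => h.2.2.2.2.1 x y z z'

theorem theta_smul_right (c : ℂ) (y z : E) : theta h y (c • z) = c • theta h y z :=
  LinearMap.ext fun x => h.2.2.2.2.2.1 c x y z

/-- The pairing `(y, z) ↦ θ_{y,z}` bundled as a sesquilinear map, conjugate-linear in `y`, so that
the general lemmas on semilinear maps apply to it. -/
def thetaₛₗ : E →ₗ⋆[ℂ] E →ₗ[ℂ] Module.End ℂ E :=
  LinearMap.mk₂'ₛₗ (starRingEnd ℂ) (RingHom.id ℂ) (theta h) (theta_add_left h) (theta_smul_left h)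
    (theta_add_right h) (theta_smul_right h)

theorem theta_zero_left (z : E) : theta h 0 z = 0 :=
  (thetaₛₗ h).map_zero₂ z

theorem theta_mul_theta (u v y z : E) : theta h u v * theta h y z = theta h y (theta h u v z) := by
  obtain ⟨-, -, -, -, -, -, assoc_left, assoc_right⟩ := id h
  exact LinearMap.ext fun x => (assoc_left x y z u v).trans (assoc_right x y z u v)

theorem isAdj_theta (y z : E) : IsAdj μ (theta h y z) (theta h z y) := by
  obtain ⟨-, -, -, -, -, -, assoc_left, -⟩ := id h
  exact fun u v w => (assoc_left u z y v w).symm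

end Theta

section Adjoint

variable (h : IsTernaryProduct μ)
include h

theorem isAdj_iff_theta : IsAdj μ T S ↔ ∀ y z : E, theta h (T y) z = theta h y z * S :=
  ⟨fun hTS y z => LinearMap.ext fun x => hTS x y z,
    fun hTS x y z => LinearMap.congr_fun (hTS y z) x⟩

theorem isAdj_zero : IsAdj μ 0 0 :=
  (isAdj_iff_theta h).2 fun y z => by rw [LinearMap.zero_apply, theta_zero_left, mul_zero]

theorem IsAdj.add (hTS : IsAdj μ T S) (hUR : IsAdj μ U R) : IsAdj μ (T + U) (S + R) := by
  rw [isAdj_iff_theta h] at *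
  intro y z
  rw [LinearMap.add_apply, theta_add_left, hTS, hUR, mul_add]

theorem IsAdj.smul (c : ℂ) (hTS : IsAdj μ T S) : IsAdj μ (c • T) (conj c • S) := by
  rw [isAdj_iff_theta h] at *
  intro y z
  rw [LinearMap.smul_apply, theta_smul_left, hTS, mul_smul_comm]

theorem IsAdj.eq_zero_of_mul_eq_zero (hadm : ∀ x : E, μ x x x = 0 → x = 0) (hTS : IsAdj μ T S)
    (hmul : T * S = 0) : T = 0 := by
  have hS (x : E) : S x = 0 := by
    apply hadm
    calc μ (S x) (S x) (S x) = μ x ((T * S) x) (S x) := (hTS x (S x) (S x)).symm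
      _ = theta h 0 (S x) x := by rw [hmul, LinearMap.zero_apply, theta_apply]
      _ = 0 := by rw [theta_zero_left, LinearMap.zero_apply]
  ext x
  apply hadm
  calc μ (T x) (T x) (T x) = theta h x (T x) (S (T x)) := hTS (T x) x (T x)
    _ = 0 := by rw [hS, map_zero]

end Adjoint

section Span

/-- The space `E₀ʳ` spanned by the endomorphisms `θ_{y,z}`. -/
def thetaSpan (h : IsTernaryProduct μ) : Submodule ℂ (Module.End ℂ E) :=
  Submodule.span ℂ {u : Module.End ℂ E | ∃ y z : E, u = theta h y z}

variable {h : IsTernaryProduct μ}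

theorem theta_mem_thetaSpan (y z : E) : theta h y z ∈ thetaSpan h :=
  Submodule.subset_span ⟨y, z, rfl⟩

theorem mul_theta_of_mem_thetaSpan (hT : T ∈ thetaSpan h) (y z : E) :
    T * theta h y z = theta h y (T z) := by
  -- For fixed `y` and `z`, both sides are linear in `T`.
  refine LinearMap.eqOn_span (f := LinearMap.mulRight ℂ (theta h y z))
    (g := thetaₛₗ h y ∘ₗ LinearMap.applyₗ z) ?_ hT
  rintro _ ⟨u, v, rfl⟩
  exact theta_mul_theta h u v y z

theorem mul_mem_thetaSpan (hU : ∀ y z : E, U * theta h y z = theta h y (U z))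
    (hT : T ∈ thetaSpan h) : U * T ∈ thetaSpan h := by
  suffices thetaSpan h ≤ (thetaSpan h).comap (LinearMap.mulLeft ℂ U) from this hT
  refine Submodule.span_le.2 ?_
  rintro _ ⟨y, z, rfl⟩
  change U * theta h y z ∈ thetaSpan h
  rw [hU]
  exact theta_mem_thetaSpan y (U z)

theorem exists_isAdj_of_mem_thetaSpan (hT : T ∈ thetaSpan h) : ∃ S ∈ thetaSpan h, IsAdj μ T S := by
  induction hT using Submodule.span_induction with
  | mem T hT =>
    obtain ⟨y, z, rfl⟩ := hT
    exact ⟨theta h z y, theta_mem_thetaSpan z y, isAdj_theta h y z⟩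
  | zero => exact ⟨0, zero_mem _, isAdj_zero h⟩
  | add T U _ _ ihT ihU =>
    obtain ⟨S, hS, hTS⟩ := ihT
    obtain ⟨R, hR, hUR⟩ := ihU
    exact ⟨S + R, add_mem hS hR, hTS.add h hUR⟩
  | smul c T _ ihT =>
    obtain ⟨S, hS, hTS⟩ := ihT
    exact ⟨conj c • S, Submodule.smul_mem _ _ hS, hTS.smul h c⟩

end Span

end

/-- Let `E` be an admissible `*`-tring and
`E₀ʳ := span{θ_{y,z} : y,z ∈ E} ⊆ L_l(E)`, with the multiplication opposite to
composition (so `p * q := q ∘ p`, i.e. `q * p` in `Module.End`), the involution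
`T ↦ T*`, the right action `x · T := T x` and `⟪x,y⟫_r := θ_{x,y}`.  Then
`(E, E₀ʳ, ⟪·,·⟫_r)` is a full admissible basic triple whose associated ternary
product coincides with `μ`.  (Fullness holds by construction, since `E₀ʳ` is
by definition the span of the inner products `θ_{x,y}`.) -/
theorem stmt_3 {E : Type*} [AddCommGroup E] [Module ℂ E] (μ : E → E → E → E)
    (h : IsTernaryProduct μ) (hadm : ∀ x : E, μ x x x = 0 → x = 0) :
    -- `E₀ʳ` is closed under the (opposite) multiplication …
    (∀ T U : Module.End ℂ E,
      T ∈ Submodule.span ℂ {u : Module.End ℂ E | ∃ y z : E, u = theta h y z} →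
      U ∈ Submodule.span ℂ {u : Module.End ℂ E | ∃ y z : E, u = theta h y z} →
      U * T ∈ Submodule.span ℂ {u : Module.End ℂ E | ∃ y z : E, u = theta h y z}) ∧
    -- … and under the involution, so it is a `*`-subalgebra of `L_l(E)ᵒᵖ`
    (∀ T : Module.End ℂ E,
      T ∈ Submodule.span ℂ {u : Module.End ℂ E | ∃ y z : E, u = theta h y z} →
      ∃ T' ∈ Submodule.span ℂ {u : Module.End ℂ E | ∃ y z : E, u = theta h y z},
        IsAdj μ T T') ∧
    -- the `*`-algebra `E₀ʳ` is admissible: `(star T) * T = 0 → T = 0`, where the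
    -- opposite product `(star T) * T` is the composition `T ∘ T*`
    (∀ T T' : Module.End ℂ E,
      T ∈ Submodule.span ℂ {u : Module.End ℂ E | ∃ y z : E, u = theta h y z} →
      IsAdj μ T T' → T * T' = 0 → T = 0) ∧
    -- the pairing is conjugate-linear in the first variable and linear in the
    -- second one
    (∀ (c : ℂ) (x x' y : E), theta h (x + x') y = theta h x y + theta h x' y ∧
      theta h x (x' + y) = theta h x x' + theta h x y ∧
      theta h (c • x) y = conj c • theta h x y ∧
      theta h x (c • y) = c • theta h x y) ∧
    -- compatibility of the pairing with the right action:
    -- `⟪x,y⟫ · T = ⟪x, y·T⟫`, where in the opposite algebra `⟪x,y⟫ · T` is the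
    -- composition `T ∘ θ_{x,y}`
    (∀ T : Module.End ℂ E,
      T ∈ Submodule.span ℂ {u : Module.End ℂ E | ∃ y z : E, u = theta h y z} →
      ∀ x y : E, T * theta h x y = theta h x (T y)) ∧
    -- the involution sends `⟪x,y⟫` to `⟪y,x⟫`
    (∀ x y : E, IsAdj μ (theta h x y) (theta h y x)) ∧
    -- the associated ternary product `x⟪y,z⟫ = θ_{y,z}(x)` coincides with `μ`
    (∀ x y z : E, theta h y z x = μ x y z) := by
  exact ⟨fun _ _ hT hU => mul_mem_thetaSpan (mul_theta_of_mem_thetaSpan hU) hT,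
    fun _ hT => exists_isAdj_of_mem_thetaSpan hT,
    fun _ _ _ hTT' hmul => hTT'.eq_zero_of_mul_eq_zero h hadm hmul,
    fun c x x' y => ⟨theta_add_left h x x' y, theta_add_right h x x' y, theta_smul_left h c x y,
      theta_smul_right h c x y⟩,
    fun _ hT => mul_theta_of_mem_thetaSpan hT,
    isAdj_theta h,
    fun x y z => theta_apply h x y z⟩
end
end

section
/- Let (E, A, ⟨·,·⟩_A) and (F, B, ⟨·,·⟩_B) be full basic triples such that E and F with their associated ternary products are admissible *-trings and are faithful modules over A and B respectively. Let φ : E → F be a homomorphism of the associated *-trings and let ψ : A → B be the induced *-algebra homomorphism, i.e., the unique one with ψ(⟨x,y⟩_A) = ⟨φ(x),φ(y)⟩_B for all x,y ∈ E. Then φ is injective if and only if ψ is injective, and if φ is surjective then ψ is surjective. -/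
noncomputable section

open scoped ComplexConjugate

/-- A (right) basic triple `(E, A, ⟪·,·⟫)`: a right module `E` over a complex
`*`-algebra `A`, together with an `A`-valued pairing which is conjugate-linear
in the first variable and linear in the second one, compatible with the module
structure and the involution. -/
structure BasicTriple (E A : Type*) [AddCommGroup E] [Module ℂ E]
    [NonUnitalRing A] [Module ℂ A] [StarRing A] where
  act : E → A → E
  inner : E → E → A
  act_add_left : ∀ (x y : E) (a : A), act (x + y) a = act x a + act y a
  act_add_right : ∀ (x : E) (a b : A), act x (a + b) = act x a + act x b
  act_smul_left : ∀ (c : ℂ) (x : E) (a : A), act (c • x) a = c • act x a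
  act_smul_right : ∀ (c : ℂ) (x : E) (a : A), act x (c • a) = c • act x a
  act_mul : ∀ (x : E) (a b : A), act (act x a) b = act x (a * b)
  inner_add_left : ∀ x y z : E, inner (x + y) z = inner x z + inner y z
  inner_add_right : ∀ x y z : E, inner x (y + z) = inner x y + inner x z
  inner_smul_left : ∀ (c : ℂ) (x y : E), inner (c • x) y = conj c • inner x y
  inner_smul_right : ∀ (c : ℂ) (x y : E), inner x (c • y) = c • inner x y
  inner_mul : ∀ (x y : E) (a : A), inner x y * a = inner x (act y a)
  star_inner : ∀ x y : E, star (inner x y) = inner y x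

variable {E A : Type*} [AddCommGroup E] [Module ℂ E]
    [NonUnitalRing A] [Module ℂ A] [StarRing A]

/-- The ternary product associated with a basic triple: `μ(x,y,z) = x⟪y,z⟫`. -/
def BasicTriple.mu (t : BasicTriple E A) (x y z : E) : E := t.act x (t.inner y z)

/-- The basic triple is full: `A = span{⟪x,y⟫ : x, y ∈ E}`. -/
def BasicTriple.Full (t : BasicTriple E A) : Prop :=
  Submodule.span ℂ {a : A | ∃ x y : E, t.inner x y = a} = ⊤

/-- `E` is a faithful `A`-module. -/
def BasicTriple.Faithful (t : BasicTriple E A) : Prop :=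
  ∀ a : A, (∀ x : E, t.act x a = 0) → a = 0

/-!
Since `A` is spanned by the values `⟪y, z⟫`, the identity `φ (x⟪y, z⟫) = φ x ⟪φ y, φ z⟫` extends to
`φ (x a) = φ x ψ(a)` for every `a : A`. Hence an injective `φ` sends `ker ψ` to elements acting by
zero on `E`, which vanish by faithfulness. Conversely `φ x = 0` gives `ψ ⟪x, x⟫ = 0`; if `ψ` is
injective then `x⟪x, x⟫ = 0`, so `x = 0` by admissibility. If `φ` is surjective, the range of `ψ`
contains the values of the pairing on `F`, which span `B`.
-/

namespace BasicTriple

/-- Right multiplication of a fixed `x : E`, as the `ℂ`-linear map `a ↦ x a`; its linearity makes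
identities between actions checkable on a spanning set of `A`. -/
def actLinear (t : BasicTriple E A) (x : E) : A →ₗ[ℂ] E where
  toFun := t.act x
  map_add' := t.act_add_right x
  map_smul' c a := t.act_smul_right c x a

lemma act_zero (t : BasicTriple E A) (x : E) : t.act x 0 = 0 :=
  map_zero (t.actLinear x)

lemma inner_zero_right (t : BasicTriple E A) (x : E) : t.inner x 0 = 0 := by
  simpa only [zero_smul] using t.inner_smul_right 0 x 0

lemma inner_self_eq_zero_iff (t : BasicTriple E A) (hadm : ∀ x : E, t.mu x x x = 0 → x = 0)
    {x : E} : t.inner x x = 0 ↔ x = 0 := by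
  refine ⟨fun hx ↦ hadm x ?_, fun hx ↦ hx ▸ t.inner_zero_right 0⟩
  rw [mu, hx, act_zero]

variable {F B : Type*} [AddCommGroup F] [Module ℂ F] [NonUnitalRing B] [Module ℂ B] [StarRing B]
  {t : BasicTriple E A} {s : BasicTriple F B}

lemma map_act (hfull : t.Full) {φ : E →ₗ[ℂ] F}
    (hφ : ∀ x y z : E, φ (t.mu x y z) = s.mu (φ x) (φ y) (φ z)) {ψ : A →ₗ[ℂ] B}
    (hψ : ∀ x y : E, ψ (t.inner x y) = s.inner (φ x) (φ y)) (x : E) (a : A) :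
    φ (t.act x a) = s.act (φ x) (ψ a) := by
  suffices h : φ ∘ₗ t.actLinear x = s.actLinear (φ x) ∘ₗ ψ from LinearMap.congr_fun h a
  refine LinearMap.ext_on hfull ?_
  rintro _ ⟨y, z, rfl⟩
  calc φ (t.mu x y z) = s.act (φ x) (s.inner (φ y) (φ z)) := hφ x y z
    _ = s.act (φ x) (ψ (t.inner y z)) := by rw [hψ]

lemma Faithful.injective_of_map_act (hfaith : t.Faithful) {φ : E →ₗ[ℂ] F} {ψ : A →ₗ[ℂ] B}
    (hact : ∀ (x : E) (a : A), φ (t.act x a) = s.act (φ x) (ψ a)) (hinj : Function.Injective φ) :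
    Function.Injective ψ := by
  refine (injective_iff_map_eq_zero ψ).mpr fun a ha ↦ hfaith a fun x ↦ ?_
  rw [← map_eq_zero_iff φ hinj, hact, ha, act_zero]

lemma injective_of_map_inner (hpos : ∀ x : E, t.inner x x = 0 → x = 0) {φ : E →ₗ[ℂ] F}
    {ψ : A →ₗ[ℂ] B} (hψ : ∀ x y : E, ψ (t.inner x y) = s.inner (φ x) (φ y))
    (hinj : Function.Injective ψ) : Function.Injective φ := by
  refine (injective_iff_map_eq_zero φ).mpr fun x hx ↦ hpos x ?_
  rw [← map_eq_zero_iff ψ hinj, hψ, hx, inner_zero_right]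

lemma Full.surjective_of_map_inner (hfull : s.Full) {φ : E → F} {ψ : A →ₗ[ℂ] B}
    (hψ : ∀ x y : E, ψ (t.inner x y) = s.inner (φ x) (φ y)) (hsurj : Function.Surjective φ) :
    Function.Surjective ψ := by
  rw [← LinearMap.range_eq_top, eq_top_iff, ← hfull, Submodule.span_le]
  rintro _ ⟨u, v, rfl⟩
  obtain ⟨x, rfl⟩ := hsurj u
  obtain ⟨y, rfl⟩ := hsurj v
  exact ⟨t.inner x y, hψ x y⟩

end BasicTriple

theorem stmt_5_general {E A F B : Type*} [AddCommGroup E] [Module ℂ E]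
    [NonUnitalRing A] [Module ℂ A] [StarRing A] [AddCommGroup F] [Module ℂ F]
    [NonUnitalRing B] [Module ℂ B] [StarRing B]
    (t : BasicTriple E A) (s : BasicTriple F B)
    (htfull : t.Full) (hsfull : s.Full)
    (hEadm : ∀ x : E, t.mu x x x = 0 → x = 0)
    (htfaith : t.Faithful)
    (φ : E →ₗ[ℂ] F)
    (hφ : ∀ x y z : E, φ (t.mu x y z) = s.mu (φ x) (φ y) (φ z))
    (ψ : A →ₗ[ℂ] B)
    (hψ : ∀ x y : E, ψ (t.inner x y) = s.inner (φ x) (φ y)) :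
    (Function.Injective φ ↔ Function.Injective ψ) ∧
    (Function.Surjective φ → Function.Surjective ψ) :=
  ⟨⟨htfaith.injective_of_map_act (BasicTriple.map_act htfull hφ hψ),
    BasicTriple.injective_of_map_inner (fun _ ↦ (t.inner_self_eq_zero_iff hEadm).mp) hψ⟩,
    hsfull.surjective_of_map_inner hψ⟩

/-- Let `(E, A, ⟪·,·⟫_A)` and `(F, B, ⟪·,·⟫_B)` be full basic
triples whose associated `*`-trings are admissible and which are faithful
modules, let `φ : E → F` be a homomorphism of the associated `*`-trings and
`ψ : A → B` the induced `*`-homomorphism (the unique one with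
`ψ⟪x,y⟫_A = ⟪φ x, φ y⟫_B`).  Then `φ` is injective iff `ψ` is injective, and if
`φ` is surjective then so is `ψ`. -/
theorem stmt_5 {E A F B : Type*} [AddCommGroup E] [Module ℂ E]
    [NonUnitalRing A] [Module ℂ A] [StarRing A] [StarModule ℂ A]
    [IsScalarTower ℂ A A] [SMulCommClass ℂ A A]
    [AddCommGroup F] [Module ℂ F]
    [NonUnitalRing B] [Module ℂ B] [StarRing B] [StarModule ℂ B]
    [IsScalarTower ℂ B B] [SMulCommClass ℂ B B]
    (t : BasicTriple E A) (s : BasicTriple F B)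
    (htfull : t.Full) (hsfull : s.Full)
    (hEadm : ∀ x : E, t.mu x x x = 0 → x = 0)
    (hFadm : ∀ y : F, s.mu y y y = 0 → y = 0)
    (htfaith : t.Faithful) (hsfaith : s.Faithful)
    (φ : E →ₗ[ℂ] F)
    (hφ : ∀ x y z : E, φ (t.mu x y z) = s.mu (φ x) (φ y) (φ z))
    (ψ : A →⋆ₙₐ[ℂ] B)
    (hψ : ∀ x y : E, ψ (t.inner x y) = s.inner (φ x) (φ y)) :
    (Function.Injective φ ↔ Function.Injective ψ) ∧
    (Function.Surjective φ → Function.Surjective ψ) := by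
  exact stmt_5_general t s htfull hsfull hEadm htfaith φ hφ (ψ : A →ₗ[ℂ] B) hψ
end
end

section
/- Let (E, A, ⟨·,·⟩) be a full basic triple such that E with the associated ternary product is an admissible *-tring and E is a faithful A-module. Then the map Φ sending a C*-seminorm γ on E to γ^r, where γ^r(a) := sup{γ(xa) : x ∈ E, γ(x) ≤ 1}, and the map Ψ sending a C*-seminorm α on A satisfying the Cauchy–Schwarz condition to α̃, where α̃(x) := α(⟨x,x⟩)^{1/2}, are mutually inverse order-preserving bijections between the set of C*-seminorms on E and the set of C*-seminorms on A satisfying the Cauchy–Schwarz condition. Moreover Φ restricts to a bijection between the C*-norms on E and the C*-norms on A satisfying the Cauchy–Schwarz condition. -/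
noncomputable section

open scoped ComplexConjugate

variable {E A : Type*} [AddCommGroup E] [Module ℂ E]
    [NonUnitalRing A] [Module ℂ A] [StarRing A]

/-- A `C*`-seminorm on a `*`-tring `(E, μ)`. -/
def IsCStarSeminormTring {E : Type*} [AddCommGroup E] [Module ℂ E]
    (μ : E → E → E → E) (γ : E → ℝ) : Prop :=
  (∀ x y : E, γ (x + y) ≤ γ x + γ y) ∧
  (∀ (c : ℂ) (x : E), γ (c • x) = ‖c‖ * γ x) ∧
  (∀ x y z : E, γ (μ x y z) ≤ γ x * γ y * γ z) ∧
  (∀ x : E, γ (μ x x x) = (γ x) ^ 3)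

/-- A `C*`-seminorm on a complex `*`-algebra `A`. -/
def IsCStarSeminormAlg {A : Type*} [NonUnitalRing A] [Module ℂ A] [StarRing A]
    (α : A → ℝ) : Prop :=
  (∀ a b : A, α (a + b) ≤ α a + α b) ∧
  (∀ (c : ℂ) (a : A), α (c • a) = ‖c‖ * α a) ∧
  (∀ a b : A, α (a * b) ≤ α a * α b) ∧
  (∀ a : A, α (star a * a) = (α a) ^ 2)

variable [StarModule ℂ A] [IsScalarTower ℂ A A] [SMulCommClass ℂ A A]

/-- `Φ` sends a `C*`-seminorm `γ` on `E` to the operator seminorm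
`γʳ(a) = sup{γ(xa) : γ(x) ≤ 1}` on `A`. -/
def PhiMap (t : BasicTriple E A) (γ : E → ℝ) : A → ℝ :=
  fun a => sSup {s : ℝ | ∃ x : E, γ x ≤ 1 ∧ s = γ (t.act x a)}

/-- `Ψ` sends a `C*`-seminorm `α` on `A` (with the Cauchy–Schwarz property) to
the seminorm `α̃(x) = α(⟪x,x⟫)^{1/2}` on `E`. -/
def PsiMap (t : BasicTriple E A) (α : A → ℝ) : E → ℝ :=
  fun x => Real.sqrt (α (t.inner x x))

/-- `α` is a `C*`-seminorm on `A` satisfying the Cauchy–Schwarz condition for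
the pairing of the basic triple `t`. -/
def IsCSSeminorm (t : BasicTriple E A) (α : A → ℝ) : Prop :=
  IsCStarSeminormAlg α ∧
    ∀ x y : E, (α (t.inner x y)) ^ 2 ≤ α (t.inner x x) * α (t.inner y y)

/-!
The identity `γ(x⟪x,x⟫) = γ(x)³` says that `γ(x)²` is the operator seminorm of `⟪x,x⟫`, so `Ψ ∘ Φ`
is the identity. For `Φ ∘ Ψ`, the bound `γ(xa) ≤ α(a) γ(x)` with `γ = Ψ(α)` gives `Φ(γ) ≤ α`. The
reverse inequality comes from a comparison principle: a `C*`-seminorm `α` lies below a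
`C*`-seminorm `β` as soon as each left multiplication `b ↦ hb` is bounded from `β` to `α`. Indeed,
for self-adjoint `h` and `N = 2ᵏ` one has `α(h)^N = α(h^N) ≤ C β(h^(N-1)) ≤ C β(h)^(N-1)`, and
`k → ∞` removes the constant. By fullness it suffices to bound multiplication by `h = ⟪y,z⟫`, where
the Cauchy–Schwarz inequality gives `α(⟪y,zb⟫) ≤ γ(y) γ(z) Φ(γ)(b)`. The same principle shows that
`Φ` is monotone.
-/

section General

open Filter Topology

theorem le_of_frequently_pow_succ_le_mul_pow {p q C : ℝ} (hq : 0 ≤ q)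
    (h : ∃ᶠ n : ℕ in atTop, p ^ (n + 1) ≤ C * q ^ n) : p ≤ q := by
  by_contra! hqp
  have hp : 0 < p := hq.trans_lt hqp
  have hlim : Tendsto (fun n : ℕ => C * (q / p) ^ n) atTop (𝓝 0) := by
    simpa only [mul_zero] using (tendsto_pow_atTop_nhds_zero_of_lt_one (by positivity)
      ((div_lt_one hp).2 hqp)).const_mul C
  obtain ⟨n, hn, hlt⟩ := (h.and_eventually (hlim.eventually_lt_const hp)).exists
  have hle : p ≤ C * (q / p) ^ n := by
    rw [div_pow, ← mul_div_assoc, le_div_iff₀ (by positivity), ← pow_succ']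
    exact hn
  exact hle.not_gt hlt

theorem pow_le_of_pow_succ_le_mul {R : Type*} [Semiring R] [LinearOrder R] [IsStrictOrderedRing R]
    {p r : R} {n : ℕ} (hn : n ≠ 0) (hp : 0 ≤ p) (hr : 0 ≤ r) (h : p ^ (n + 1) ≤ r * p) :
    p ^ n ≤ r := by
  rcases hp.eq_or_lt with rfl | hp
  · rwa [zero_pow hn]
  · exact le_of_mul_le_mul_right (pow_succ p n ▸ h) hp

theorem map_star_eq_of_sq_le_mul {B : Type*} [InvolutiveStar B] {α : B → ℝ}
    (nonneg : ∀ a, 0 ≤ α a) (sq_le : ∀ a, α a ^ 2 ≤ α (star a) * α a) (a : B) :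
    α (star a) = α a := by
  have le_map_star (b : B) : α b ≤ α (star b) := by
    simpa only [pow_one] using
      pow_le_of_pow_succ_le_mul one_ne_zero (nonneg b) (nonneg (star b)) (sq_le b)
  exact le_antisymm (by simpa only [star_star] using le_map_star (star a)) (le_map_star a)

theorem exists_forall_seminorm_le_mul_of_mem_span {𝕜 M V ι : Type*} [NormedField 𝕜]
    [AddCommGroup M] [Module 𝕜 M] [AddCommGroup V] [Module 𝕜 V] (p : Seminorm 𝕜 V)
    {L : M → ι → V} (hL : ∀ i, IsLinearMap 𝕜 fun a => L a i) (w : ι → ℝ) {s : Set M}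
    (hs : ∀ a ∈ s, ∃ C : ℝ, ∀ i, p (L a i) ≤ C * w i) {a : M} (ha : a ∈ Submodule.span 𝕜 s) :
    ∃ C : ℝ, ∀ i, p (L a i) ≤ C * w i := by
  induction ha using Submodule.span_induction with
  | mem a ha => exact hs a ha
  | zero => exact ⟨0, fun i => by rw [(hL i).map_zero, map_zero, zero_mul]⟩
  | add a b _ _ iha ihb =>
    obtain ⟨C, hC⟩ := iha
    obtain ⟨D, hD⟩ := ihb
    refine ⟨C + D, fun i => ?_⟩
    rw [(hL i).map_add, add_mul]
    exact (map_add_le_add p _ _).trans (add_le_add (hC i) (hD i))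
  | smul c a _ iha =>
    obtain ⟨C, hC⟩ := iha
    refine ⟨‖c‖ * C, fun i => ?_⟩
    rw [(hL i).map_smul, map_smul_eq_mul, mul_assoc]
    exact mul_le_mul_of_nonneg_left (hC i) (norm_nonneg c)

end General

namespace IsCStarSeminormAlg

variable {B : Type*} [NonUnitalRing B] [Module ℂ B] [StarRing B] {α β : B → ℝ}

theorem add_le (hα : IsCStarSeminormAlg α) (a b : B) : α (a + b) ≤ α a + α b := hα.1 a b

theorem map_smul (hα : IsCStarSeminormAlg α) (c : ℂ) (a : B) : α (c • a) = ‖c‖ * α a := hα.2.1 c a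

theorem mul_le (hα : IsCStarSeminormAlg α) (a b : B) : α (a * b) ≤ α a * α b := hα.2.2.1 a b

theorem map_star_mul_self (hα : IsCStarSeminormAlg α) (a : B) : α (star a * a) = α a ^ 2 :=
  hα.2.2.2 a

/-- The underlying vector space seminorm, giving access to Mathlib's API for seminorms. -/
def toSeminorm (hα : IsCStarSeminormAlg α) : Seminorm ℂ B := .of α hα.add_le hα.map_smul

theorem nonneg (hα : IsCStarSeminormAlg α) (a : B) : 0 ≤ α a := apply_nonneg hα.toSeminorm a

theorem map_star (hα : IsCStarSeminormAlg α) (a : B) : α (star a) = α a :=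
  map_star_eq_of_sq_le_mul hα.nonneg
    (fun b => (hα.map_star_mul_self b).ge.trans (hα.mul_le (star b) b)) a

theorem map_mul_self (hα : IsCStarSeminormAlg α) {h : B} (hh : IsSelfAdjoint h) :
    α (h * h) = α h ^ 2 := by
  rw [← hα.map_star_mul_self, hh.star_eq]

theorem of_sq_le_map_mul_star (nonneg : ∀ a, 0 ≤ α a) (add_le : ∀ a b, α (a + b) ≤ α a + α b)
    (smul_le : ∀ (c : ℂ) (a : B), α (c • a) ≤ ‖c‖ * α a)
    (mul_le : ∀ a b, α (a * b) ≤ α a * α b) (sq_le : ∀ a, α a ^ 2 ≤ α (a * star a)) :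
    IsCStarSeminormAlg α := by
  have map_zero : α 0 = 0 := le_antisymm (by simpa using smul_le 0 0) (nonneg 0)
  have map_star (a : B) : α (star a) = α a :=
    map_star_eq_of_sq_le_mul nonneg
      (fun b => (sq_le b).trans ((mul_le b (star b)).trans_eq (mul_comm _ _))) a
  refine ⟨add_le, (Seminorm.ofSMulLE α map_zero add_le smul_le).smul', mul_le, fun a => ?_⟩
  refine le_antisymm ?_ ?_
  · simpa only [map_star, sq] using mul_le (star a) a
  · simpa only [map_star, star_star] using sq_le (star a)

theorem map_mul_mul_self (hα : IsCStarSeminormAlg α) {h : B} (hh : IsSelfAdjoint h) :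
    α (h * (h * h)) = α h ^ 3 := by
  have hsq : IsSelfAdjoint (h * h) := (hh.commute_iff hh).1 (.refl h)
  refine le_antisymm ?_ ?_
  · calc α (h * (h * h)) ≤ α h * α (h * h) := hα.mul_le _ _
      _ = α h ^ 3 := by rw [hα.map_mul_self hh]; ring
  · refine pow_le_of_pow_succ_le_mul three_ne_zero (hα.nonneg h) (hα.nonneg _) ?_
    calc α h ^ 4 = α (h * h * (h * h)) := by
          rw [hα.map_mul_self hsq, hα.map_mul_self hh]; ring
      _ ≤ α (h * (h * h)) * α h := by
          rw [mul_assoc, mul_comm (α _)]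
          exact hα.mul_le _ _

theorem map_iterate_mul_self (hα : IsCStarSeminormAlg α) {h : B} (hh : IsSelfAdjoint h) (k : ℕ) :
    α ((fun b => b * b)^[k] h) = α h ^ 2 ^ k := by
  induction k generalizing h with
  | zero => simp
  | succ k ih =>
    have hsq : IsSelfAdjoint (h * h) := (hh.commute_iff hh).1 (.refl h)
    rw [Function.iterate_succ_apply, ih hsq, hα.map_mul_self hh, ← pow_mul, pow_succ']

-- A non-unital ring has no `h ^ 0`, so `h ^ (2 ^ (k + 1) - 1)` enters as a cofactor of `h`.
theorem exists_mul_eq_iterate_mul_self (hβ : IsCStarSeminormAlg β) (h : B) (k : ℕ) :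
    ∃ b, h * b = (fun b => b * b)^[k + 1] h ∧ β b ≤ β h ^ (2 ^ (k + 1) - 1) := by
  induction k with
  | zero => exact ⟨h, rfl, by simp⟩
  | succ k ih =>
    obtain ⟨b, hb, hle⟩ := ih
    refine ⟨b * (h * b), ?_, ?_⟩
    · rw [Function.iterate_succ_apply', ← hb, mul_assoc]
    · set m := 2 ^ (k + 1) - 1
      have hexp : 2 ^ (k + 1 + 1) - 1 = m + (1 + m) := by
        have : 0 < 2 ^ (k + 1) := by positivity
        rw [pow_succ]
        omega
      calc β (b * (h * b)) ≤ β b * (β h * β b) :=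
            (hβ.mul_le _ _).trans (mul_le_mul_of_nonneg_left (hβ.mul_le _ _) (hβ.nonneg b))
        _ ≤ β h ^ m * (β h * β h ^ m) := by
            have := hβ.nonneg h
            have := hβ.nonneg b
            gcongr
        _ = β h ^ (2 ^ (k + 1 + 1) - 1) := by rw [hexp]; ring

theorem le_of_isSelfAdjoint_of_mul_le (hα : IsCStarSeminormAlg α) (hβ : IsCStarSeminormAlg β)
    {h : B} (hh : IsSelfAdjoint h) {C : ℝ} (hC : ∀ b, α (h * b) ≤ C * β b) : α h ≤ β h := by
  have pow_le (k : ℕ) : α h ^ (2 ^ (k + 1) - 1 + 1) ≤ |C| * β h ^ (2 ^ (k + 1) - 1) := by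
    obtain ⟨b, hb, hle⟩ := hβ.exists_mul_eq_iterate_mul_self h k
    calc α h ^ (2 ^ (k + 1) - 1 + 1) = α (h * b) := by
          rw [hb, hα.map_iterate_mul_self hh, Nat.sub_add_cancel Nat.one_le_two_pow]
      _ ≤ C * β b := hC b
      _ ≤ |C| * β h ^ (2 ^ (k + 1) - 1) :=
          mul_le_mul (le_abs_self C) hle (hβ.nonneg b) (abs_nonneg C)
  have frequently_pow_le : ∃ᶠ n : ℕ in Filter.atTop, α h ^ (n + 1) ≤ |C| * β h ^ n := by
    refine Filter.frequently_atTop.2 fun k => ⟨2 ^ (k + 1) - 1, ?_, pow_le k⟩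
    exact Nat.le_sub_one_of_lt (k.lt_succ_self.trans Nat.lt_two_pow_self)
  exact le_of_frequently_pow_succ_le_mul_pow (hβ.nonneg h) frequently_pow_le

theorem le_of_forall_exists_mul_le (hα : IsCStarSeminormAlg α) (hβ : IsCStarSeminormAlg β)
    (H : ∀ h, ∃ C : ℝ, ∀ b, α (h * b) ≤ C * β b) (a : B) : α a ≤ β a := by
  obtain ⟨C, hC⟩ := H (star a * a)
  have hle := hα.le_of_isSelfAdjoint_of_mul_le hβ (.star_mul_self a) hC
  rw [hα.map_star_mul_self, hβ.map_star_mul_self] at hle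
  exact le_of_sq_le_sq hle (hβ.nonneg a)

end IsCStarSeminormAlg

namespace IsCStarSeminormTring

variable {F : Type*} [AddCommGroup F] [Module ℂ F] {μ : F → F → F → F} {γ : F → ℝ}

theorem add_le (hγ : IsCStarSeminormTring μ γ) (x y : F) : γ (x + y) ≤ γ x + γ y := hγ.1 x y

theorem map_smul (hγ : IsCStarSeminormTring μ γ) (c : ℂ) (x : F) : γ (c • x) = ‖c‖ * γ x :=
  hγ.2.1 c x

theorem map_ternary_le (hγ : IsCStarSeminormTring μ γ) (x y z : F) :
    γ (μ x y z) ≤ γ x * γ y * γ z := hγ.2.2.1 x y z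

theorem map_ternary_self (hγ : IsCStarSeminormTring μ γ) (x : F) : γ (μ x x x) = γ x ^ 3 :=
  hγ.2.2.2 x

/-- The underlying vector space seminorm, giving access to Mathlib's API for seminorms. -/
def toSeminorm (hγ : IsCStarSeminormTring μ γ) : Seminorm ℂ F := .of γ hγ.add_le hγ.map_smul

theorem nonneg (hγ : IsCStarSeminormTring μ γ) (x : F) : 0 ≤ γ x := apply_nonneg hγ.toSeminorm x

end IsCStarSeminormTring

section BasicTriple

variable {F B : Type*} [AddCommGroup F] [Module ℂ F] [NonUnitalRing B] [Module ℂ B] [StarRing B]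
  {t : BasicTriple F B} {γ γ₁ γ₂ : F → ℝ} {α : B → ℝ}

theorem BasicTriple.inner_act_left (t : BasicTriple F B) (x y : F) (a : B) :
    t.inner (t.act x a) y = star a * t.inner x y := by
  rw [← t.star_inner, ← t.inner_mul, star_mul, t.star_inner]

theorem BasicTriple.act_zero_s9 (t : BasicTriple F B) (x : F) : t.act x 0 = 0 := by
  simpa using t.act_smul_right 0 x 0

theorem BasicTriple.isSelfAdjoint_inner_self (t : BasicTriple F B) (x : F) :
    IsSelfAdjoint (t.inner x x) := t.star_inner x x

theorem BasicTriple.mu_act_self (t : BasicTriple F B) (x : F) (a : B) :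
    t.mu (t.act x a) (t.act x a) (t.act x a) = t.mu (t.act x (a * star a)) x (t.act x a) := by
  simp only [BasicTriple.mu, t.inner_act_left, t.act_mul, mul_assoc]

theorem BasicTriple.Full.exists_forall_le_mul {V ι : Type*} [AddCommGroup V] [Module ℂ V]
    (hfull : t.Full) (p : Seminorm ℂ V) {L : B → ι → V} (hL : ∀ i, IsLinearMap ℂ fun a => L a i)
    (w : ι → ℝ) (hinner : ∀ y z, ∃ C : ℝ, ∀ i, p (L (t.inner y z) i) ≤ C * w i) (a : B) :
    ∃ C : ℝ, ∀ i, p (L a i) ≤ C * w i := by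
  refine exists_forall_seminorm_le_mul_of_mem_span p hL w ?_ (hfull ▸ Submodule.mem_top)
  rintro _ ⟨y, z, rfl⟩
  exact hinner y z

theorem phiMap_nonneg (hγ : ∀ x, 0 ≤ γ x) (a : B) : 0 ≤ PhiMap t γ a := by
  refine Real.sSup_nonneg ?_
  rintro _ ⟨x, -, rfl⟩
  exact hγ _

theorem phiMap_le {a : B} {C : ℝ} (hC : 0 ≤ C) (h : ∀ x, γ (t.act x a) ≤ C * γ x) :
    PhiMap t γ a ≤ C := by
  refine Real.sSup_le ?_ hC
  rintro _ ⟨x, hx, rfl⟩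
  exact (h x).trans (mul_le_of_le_one_right hC hx)

namespace IsCStarSeminormTring

theorem exists_map_act_le (hγ : IsCStarSeminormTring t.mu γ) (hfull : t.Full) (a : B) :
    ∃ C : ℝ, ∀ x, γ (t.act x a) ≤ C * γ x := by
  refine hfull.exists_forall_le_mul hγ.toSeminorm (L := fun a x => t.act x a)
    (fun x => ⟨t.act_add_right x, fun c => t.act_smul_right c x⟩) γ
    (fun y z => ⟨γ y * γ z, fun x => ?_⟩) a
  exact (hγ.map_ternary_le x y z).trans_eq (by ring)

theorem map_act_le_phiMap_mul (hγ : IsCStarSeminormTring t.mu γ) (hfull : t.Full) (x : F) (a : B) :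
    γ (t.act x a) ≤ PhiMap t γ a * γ x := by
  obtain ⟨C, hC⟩ := hγ.exists_map_act_le hfull a
  rcases (hγ.nonneg x).eq_or_lt with hx | hx
  · simpa only [← hx, mul_zero] using hC x
  have hbdd : BddAbove {s : ℝ | ∃ x, γ x ≤ 1 ∧ s = γ (t.act x a)} := by
    refine ⟨|C|, ?_⟩
    rintro _ ⟨y, hy, rfl⟩
    calc γ (t.act y a) ≤ C * γ y := hC y
      _ ≤ |C| * 1 := mul_le_mul (le_abs_self C) hy (hγ.nonneg y) (abs_nonneg C)
      _ = |C| := mul_one _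
  have hnorm : ‖((γ x)⁻¹ : ℂ)‖ = (γ x)⁻¹ := by simp [abs_of_pos hx]
  have hunit : γ (((γ x)⁻¹ : ℂ) • x) ≤ 1 := by rw [hγ.map_smul, hnorm, inv_mul_cancel₀ hx.ne']
  have hle : γ (t.act (((γ x)⁻¹ : ℂ) • x) a) ≤ PhiMap t γ a := le_csSup hbdd ⟨_, hunit, rfl⟩
  rwa [t.act_smul_left, hγ.map_smul, hnorm, inv_mul_le_iff₀ hx, mul_comm] at hle

theorem phiMap_inner_le (hγ : IsCStarSeminormTring t.mu γ) (x y : F) :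
    PhiMap t γ (t.inner x y) ≤ γ x * γ y :=
  phiMap_le (mul_nonneg (hγ.nonneg x) (hγ.nonneg y)) fun z =>
    (hγ.map_ternary_le z x y).trans_eq (by ring)

theorem phiMap_inner_self (hγ : IsCStarSeminormTring t.mu γ) (hfull : t.Full) (x : F) :
    PhiMap t γ (t.inner x x) = γ x ^ 2 := by
  refine le_antisymm ((hγ.phiMap_inner_le x x).trans_eq (sq _).symm) ?_
  refine pow_le_of_pow_succ_le_mul two_ne_zero (hγ.nonneg x) (phiMap_nonneg hγ.nonneg _) ?_
  exact (hγ.map_ternary_self x).ge.trans (hγ.map_act_le_phiMap_mul hfull x (t.inner x x))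

theorem map_act_sq_le (hγ : IsCStarSeminormTring t.mu γ) (x : F) (a : B) :
    γ (t.act x a) ^ 2 ≤ γ (t.act x (a * star a)) * γ x := by
  refine pow_le_of_pow_succ_le_mul two_ne_zero (hγ.nonneg _)
    (mul_nonneg (hγ.nonneg _) (hγ.nonneg x)) ?_
  rw [← hγ.map_ternary_self, t.mu_act_self]
  exact hγ.map_ternary_le _ _ _

theorem phiMap_sq_le (hγ : IsCStarSeminormTring t.mu γ) (hfull : t.Full) (a : B) :
    PhiMap t γ a ^ 2 ≤ PhiMap t γ (a * star a) := by
  have hnonneg := phiMap_nonneg (t := t) hγ.nonneg (a * star a)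
  refine (Real.le_sqrt (phiMap_nonneg hγ.nonneg a) hnonneg).1 ?_
  refine phiMap_le (Real.sqrt_nonneg _) fun x => ?_
  refine le_of_sq_le_sq ?_ (mul_nonneg (Real.sqrt_nonneg _) (hγ.nonneg x))
  calc γ (t.act x a) ^ 2 ≤ γ (t.act x (a * star a)) * γ x := hγ.map_act_sq_le x a
    _ ≤ PhiMap t γ (a * star a) * γ x * γ x :=
        mul_le_mul_of_nonneg_right (hγ.map_act_le_phiMap_mul hfull x _) (hγ.nonneg x)
    _ = (√(PhiMap t γ (a * star a)) * γ x) ^ 2 := by rw [mul_pow, Real.sq_sqrt hnonneg]; ring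

theorem isCStarSeminormAlg_phiMap (hγ : IsCStarSeminormTring t.mu γ) (hfull : t.Full) :
    IsCStarSeminormAlg (PhiMap t γ) := by
  have hnonneg := phiMap_nonneg (t := t) hγ.nonneg
  have hact := hγ.map_act_le_phiMap_mul hfull
  refine .of_sq_le_map_mul_star hnonneg (fun a b => ?_) (fun c a => ?_) (fun a b => ?_)
    (hγ.phiMap_sq_le hfull)
  · refine phiMap_le (add_nonneg (hnonneg a) (hnonneg b)) fun x => ?_
    rw [t.act_add_right, add_mul]
    exact (hγ.add_le _ _).trans (add_le_add (hact x a) (hact x b))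
  · refine phiMap_le (mul_nonneg (norm_nonneg c) (hnonneg a)) fun x => ?_
    rw [t.act_smul_right, hγ.map_smul, mul_assoc]
    exact mul_le_mul_of_nonneg_left (hact x a) (norm_nonneg c)
  · refine phiMap_le (mul_nonneg (hnonneg a) (hnonneg b)) fun x => ?_
    calc γ (t.act x (a * b)) = γ (t.act (t.act x a) b) := by rw [t.act_mul]
      _ ≤ PhiMap t γ b * γ (t.act x a) := hact _ b
      _ ≤ PhiMap t γ b * (PhiMap t γ a * γ x) := mul_le_mul_of_nonneg_left (hact x a) (hnonneg b)
      _ = PhiMap t γ a * PhiMap t γ b * γ x := by ring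

theorem isCSSeminorm_phiMap (hγ : IsCStarSeminormTring t.mu γ) (hfull : t.Full) :
    IsCSSeminorm t (PhiMap t γ) := by
  refine ⟨hγ.isCStarSeminormAlg_phiMap hfull, fun x y => ?_⟩
  rw [hγ.phiMap_inner_self hfull, hγ.phiMap_inner_self hfull, ← mul_pow]
  exact pow_le_pow_left₀ (phiMap_nonneg hγ.nonneg _) (hγ.phiMap_inner_le x y) 2

theorem psiMap_phiMap (hγ : IsCStarSeminormTring t.mu γ) (hfull : t.Full) :
    PsiMap t (PhiMap t γ) = γ := by
  funext x
  rw [PsiMap, hγ.phiMap_inner_self hfull, Real.sqrt_sq (hγ.nonneg x)]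

theorem le_phiMap [IsScalarTower ℂ B B] (hγ : IsCStarSeminormTring t.mu γ) (hfull : t.Full)
    (hα : IsCStarSeminormAlg α) (hinner : ∀ x y, α (t.inner x y) ≤ γ x * γ y) (a : B) :
    α a ≤ PhiMap t γ a := by
  refine hα.le_of_forall_exists_mul_le (hγ.isCStarSeminormAlg_phiMap hfull) (fun h => ?_) a
  refine hfull.exists_forall_le_mul hα.toSeminorm (L := fun h b => h * b)
    (fun b => ⟨fun h k => add_mul h k b, fun c h => smul_mul_assoc c h b⟩) (PhiMap t γ)
    (fun y z => ⟨γ y * γ z, fun b => ?_⟩) h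
  calc α (t.inner y z * b) = α (t.inner y (t.act z b)) := by rw [t.inner_mul]
    _ ≤ γ y * γ (t.act z b) := hinner _ _
    _ ≤ γ y * (PhiMap t γ b * γ z) :=
        mul_le_mul_of_nonneg_left (hγ.map_act_le_phiMap_mul hfull z b) (hγ.nonneg y)
    _ = γ y * γ z * PhiMap t γ b := by ring

theorem phiMap_mono [IsScalarTower ℂ B B] (h₁ : IsCStarSeminormTring t.mu γ₁)
    (h₂ : IsCStarSeminormTring t.mu γ₂) (hfull : t.Full) (hle : ∀ x, γ₁ x ≤ γ₂ x) (a : B) :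
    PhiMap t γ₁ a ≤ PhiMap t γ₂ a :=
  h₂.le_phiMap hfull (h₁.isCStarSeminormAlg_phiMap hfull) (fun x y =>
    (h₁.phiMap_inner_le x y).trans (mul_le_mul (hle x) (hle y) (h₁.nonneg y) (h₂.nonneg x))) a

theorem eq_zero_of_phiMap_eq_zero (hγ : IsCStarSeminormTring t.mu γ) (hfull : t.Full)
    (hfaith : t.Faithful) (hnorm : ∀ x, γ x = 0 → x = 0) {a : B} (ha : PhiMap t γ a = 0) :
    a = 0 := by
  refine hfaith a fun x => hnorm _ (le_antisymm ?_ (hγ.nonneg _))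
  simpa only [ha, zero_mul] using hγ.map_act_le_phiMap_mul hfull x a

theorem eq_zero_of_map_eq_zero (hγ : IsCStarSeminormTring t.mu γ) (hfull : t.Full)
    (hadm : ∀ x, t.mu x x x = 0 → x = 0) (hnorm : ∀ a, PhiMap t γ a = 0 → a = 0) {x : F}
    (hx : γ x = 0) : x = 0 := by
  have hinner : t.inner x x = 0 :=
    hnorm _ (by rw [hγ.phiMap_inner_self hfull, hx, zero_pow two_ne_zero])
  exact hadm x (by rw [BasicTriple.mu, hinner, t.act_zero_s9])

end IsCStarSeminormTring

namespace IsCSSeminorm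

theorem psiMap_sq (hα : IsCSSeminorm t α) (x : F) : PsiMap t α x ^ 2 = α (t.inner x x) :=
  Real.sq_sqrt (hα.1.nonneg _)

theorem map_inner_le (hα : IsCSSeminorm t α) (x y : F) :
    α (t.inner x y) ≤ PsiMap t α x * PsiMap t α y := by
  rw [PsiMap, PsiMap, ← Real.sqrt_mul (hα.1.nonneg _)]
  exact Real.le_sqrt_of_sq_le (hα.2 x y)

theorem psiMap_act_le (hα : IsCSSeminorm t α) (x : F) (a : B) :
    PsiMap t α (t.act x a) ≤ α a * PsiMap t α x := by
  refine le_of_sq_le_sq ?_ (mul_nonneg (hα.1.nonneg a) (Real.sqrt_nonneg _))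
  calc PsiMap t α (t.act x a) ^ 2 = α (star a * (t.inner x x * a)) := by
        rw [hα.psiMap_sq, t.inner_act_left, t.inner_mul]
    _ ≤ α (star a) * (α (t.inner x x) * α a) :=
        (hα.1.mul_le _ _).trans (mul_le_mul_of_nonneg_left (hα.1.mul_le _ _) (hα.1.nonneg _))
    _ = (α a * PsiMap t α x) ^ 2 := by rw [hα.1.map_star, mul_pow, hα.psiMap_sq]; ring

theorem psiMap_add_le (hα : IsCSSeminorm t α) (x y : F) :
    PsiMap t α (x + y) ≤ PsiMap t α x + PsiMap t α y := by
  refine le_of_sq_le_sq ?_ (add_nonneg (Real.sqrt_nonneg _) (Real.sqrt_nonneg _))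
  calc PsiMap t α (x + y) ^ 2
      = α (t.inner x x + t.inner x y + (t.inner y x + t.inner y y)) := by
        rw [hα.psiMap_sq, t.inner_add_left, t.inner_add_right, t.inner_add_right]
    _ ≤ α (t.inner x x) + α (t.inner x y) + (α (t.inner y x) + α (t.inner y y)) :=
        (hα.1.add_le _ _).trans (add_le_add (hα.1.add_le _ _) (hα.1.add_le _ _))
    _ ≤ PsiMap t α x ^ 2 + PsiMap t α x * PsiMap t α y
          + (PsiMap t α y * PsiMap t α x + PsiMap t α y ^ 2) := by
        rw [hα.psiMap_sq, hα.psiMap_sq]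
        gcongr <;> exact hα.map_inner_le _ _
    _ = (PsiMap t α x + PsiMap t α y) ^ 2 := by ring

theorem psiMap_smul (hα : IsCSSeminorm t α) (c : ℂ) (x : F) :
    PsiMap t α (c • x) = ‖c‖ * PsiMap t α x := by
  rw [PsiMap, t.inner_smul_left, t.inner_smul_right, hα.1.map_smul, hα.1.map_smul, RCLike.norm_conj,
    ← mul_assoc, Real.sqrt_mul (by positivity), Real.sqrt_mul_self (norm_nonneg _), PsiMap]

theorem psiMap_mu_self (hα : IsCSSeminorm t α) (x : F) :
    PsiMap t α (t.mu x x x) = PsiMap t α x ^ 3 := by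
  have hsq : PsiMap t α (t.mu x x x) ^ 2 = (PsiMap t α x ^ 3) ^ 2 := by
    rw [pow_right_comm, hα.psiMap_sq, hα.psiMap_sq, BasicTriple.mu, t.inner_act_left,
      ← t.inner_mul, t.star_inner, hα.1.map_mul_mul_self (t.isSelfAdjoint_inner_self x)]
  exact (sq_eq_sq₀ (Real.sqrt_nonneg _) (pow_nonneg (Real.sqrt_nonneg _) 3)).1 hsq

theorem isCStarSeminormTring_psiMap (hα : IsCSSeminorm t α) :
    IsCStarSeminormTring t.mu (PsiMap t α) := by
  refine ⟨hα.psiMap_add_le, hα.psiMap_smul, fun x y z => ?_, hα.psiMap_mu_self⟩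
  calc PsiMap t α (t.mu x y z) ≤ α (t.inner y z) * PsiMap t α x := hα.psiMap_act_le x _
    _ ≤ PsiMap t α y * PsiMap t α z * PsiMap t α x :=
        mul_le_mul_of_nonneg_right (hα.map_inner_le y z) (Real.sqrt_nonneg _)
    _ = PsiMap t α x * PsiMap t α y * PsiMap t α z := by ring

theorem phiMap_psiMap [IsScalarTower ℂ B B] (hα : IsCSSeminorm t α) (hfull : t.Full) :
    PhiMap t (PsiMap t α) = α := by
  funext a
  refine le_antisymm (phiMap_le (hα.1.nonneg a) fun x => hα.psiMap_act_le x a) ?_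
  exact hα.isCStarSeminormTring_psiMap.le_phiMap hfull hα.1 hα.map_inner_le a

end IsCSSeminorm

end BasicTriple

/-- Let `(E, A, ⟪·,·⟫)` be a full basic triple whose
associated `*`-tring is admissible, with `E` a faithful `A`-module.  Then `Φ`
and `Ψ` are mutually inverse order-preserving bijections between the
`C*`-seminorms on `E` and the `C*`-seminorms on `A` with the Cauchy–Schwarz
property, and `Φ` restricts to a bijection between the respective
`C*`-norms. -/
theorem stmt_9 (t : BasicTriple E A) (hfull : t.Full) (hfaith : t.Faithful)
    (hadm : ∀ x : E, t.mu x x x = 0 → x = 0) :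
    (∀ γ : E → ℝ, IsCStarSeminormTring t.mu γ → IsCSSeminorm t (PhiMap t γ)) ∧
    (∀ α : A → ℝ, IsCSSeminorm t α → IsCStarSeminormTring t.mu (PsiMap t α)) ∧
    (∀ γ : E → ℝ, IsCStarSeminormTring t.mu γ → PsiMap t (PhiMap t γ) = γ) ∧
    (∀ α : A → ℝ, IsCSSeminorm t α → PhiMap t (PsiMap t α) = α) ∧
    (∀ γ₁ γ₂ : E → ℝ, IsCStarSeminormTring t.mu γ₁ → IsCStarSeminormTring t.mu γ₂ →
      (∀ x : E, γ₁ x ≤ γ₂ x) → ∀ a : A, PhiMap t γ₁ a ≤ PhiMap t γ₂ a) ∧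
    (∀ α₁ α₂ : A → ℝ, IsCSSeminorm t α₁ → IsCSSeminorm t α₂ →
      (∀ a : A, α₁ a ≤ α₂ a) → ∀ x : E, PsiMap t α₁ x ≤ PsiMap t α₂ x) ∧
    (∀ γ : E → ℝ, IsCStarSeminormTring t.mu γ →
      ((∀ x : E, γ x = 0 → x = 0) ↔ (∀ a : A, PhiMap t γ a = 0 → a = 0))) := by
  refine ⟨fun γ hγ => hγ.isCSSeminorm_phiMap hfull,
    fun α hα => hα.isCStarSeminormTring_psiMap,
    fun γ hγ => hγ.psiMap_phiMap hfull,
    fun α hα => hα.phiMap_psiMap hfull,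
    fun γ₁ γ₂ h₁ h₂ hle => h₁.phiMap_mono h₂ hfull hle,
    fun α₁ α₂ _ _ hle x => Real.sqrt_le_sqrt (hle (t.inner x x)),
    fun γ hγ => ⟨fun hnorm a => ?_, fun hnorm x => ?_⟩⟩
  · exact hγ.eq_zero_of_phiMap_eq_zero hfull hfaith hnorm
  · exact hγ.eq_zero_of_map_eq_zero hfull hadm hnorm
end
end
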